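/- The two-dimensional Dubiner basis functions are pairwise L²-orthogonal on the reference triangle: for all pairs of nonnegative integer indices (i,j) ≠ (k,l), ∬_{T²} φ_{(i,j)}(ξ₁,ξ₂) φ_{(k,l)}(ξ₁,ξ₂) dξ₁ dξ₂ = 0. -/

import Mathlib

/-- The Jacobi polynomial `P_n^{a,b}` (nonnegative integer parameters `a`, `b`), defined
through the Rodrigues formula. -/
noncomputable def jacobiP (n a b : ℕ) (x : ℝ) : ℝ :=
  ((-1 : ℝ) ^ n / (2 ^ n * n.factorial)) * (1 - x) ^ (-(a : ℤ)) * (1 + x) ^ (-(b : ℤ)) *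
    iteratedDeriv n (fun y : ℝ => (1 - y) ^ (n + a) * (1 + y) ^ (n + b)) x

/-- The two-dimensional Dubiner basis function with indices `(i, j)`. -/
noncomputable def dubiner2 (i j : ℕ) (ξ : ℝ × ℝ) : ℝ :=
  jacobiP i 0 0 ((1 + 2 * ξ.1 + ξ.2) / (1 - ξ.2)) * ((1 - ξ.2) / 2) ^ i *
    jacobiP j (2 * i + 1) 0 ξ.2

/-- The reference triangle `T² = {(ξ₁,ξ₂) : ξ₁ ≥ -1, ξ₂ ≥ -1, ξ₁+ξ₂ ≤ 0}`. -/
def refTriangle : Set (ℝ × ℝ) := {ξ | -1 ≤ ξ.1 ∧ -1 ≤ ξ.2 ∧ ξ.1 + ξ.2 ≤ 0}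

open Polynomial in
/-- The polynomial `(1 - X)^(n + a) (1 + X)^(n + b)` whose `n`-th derivative appears in the
Rodrigues formula. -/
noncomputable def rodriguesPoly (n a b : ℕ) : ℝ[X] :=
  (1 - X) ^ (n + a) * (1 + X) ^ (n + b)

open Polynomial in
theorem natDegree_rodriguesPoly_le (n a b : ℕ) :
    (rodriguesPoly n a b).natDegree ≤ (n + a) + (n + b) := by
  unfold rodriguesPoly
  compute_degree

open Polynomial in
theorem iteratedDeriv_eval (p : ℝ[X]) (n : ℕ) (x : ℝ) :
    iteratedDeriv n (fun y => p.eval y) x = (derivative^[n] p).eval x := by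
  induction n generalizing p with
  | zero => simp
  | succ n ih =>
    rw [iteratedDeriv_succ', Function.iterate_succ_apply, ← ih]
    congr 1
    ext y
    exact p.deriv

open Polynomial in
theorem weight_dvd_iterate_derivative_rodriguesPoly (n a b : ℕ) :
    (1 - X) ^ a * (1 + X) ^ b ∣ derivative^[n] (rodriguesPoly n a b) := by
  have hcop : IsCoprime (1 - X : ℝ[X]) (1 + X) := by
    refine ⟨C (1 / 2), C (1 / 2), ?_⟩
    rw [← mul_add, show (1 - X + (1 + X) : ℝ[X]) = C 2 by rw [C_ofNat]; ring, ← C_mul]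
    norm_num
  refine hcop.pow.mul_dvd ?_ ?_
  · simpa using pow_sub_dvd_iterate_derivative_of_pow_dvd n
      (Dvd.intro _ rfl : (1 - X : ℝ[X]) ^ (n + a) ∣ rodriguesPoly n a b)
  · simpa using pow_sub_dvd_iterate_derivative_of_pow_dvd n
      (Dvd.intro_left _ rfl : (1 + X : ℝ[X]) ^ (n + b) ∣ rodriguesPoly n a b)

open Polynomial in
theorem jacobiP_eq_eval_derivative (n a b : ℕ) (x : ℝ) :
    jacobiP n a b x = ((-1 : ℝ) ^ n / (2 ^ n * n.factorial)) * (1 - x) ^ (-(a : ℤ)) *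
      (1 + x) ^ (-(b : ℤ)) * (derivative^[n] (rodriguesPoly n a b)).eval x := by
  rw [← iteratedDeriv_eval]
  simp [jacobiP, rodriguesPoly]

open Polynomial in
/-- Away from the endpoints `±1`, `jacobiP n a b` is a polynomial of degree at most `n`. -/
theorem exists_polynomial_eq_jacobiP (n a b : ℕ) :
    ∃ q : ℝ[X], q.natDegree ≤ n ∧
      ∀ x : ℝ, 1 - x ≠ 0 → 1 + x ≠ 0 → jacobiP n a b x = q.eval x := by
  obtain ⟨q, hq⟩ := weight_dvd_iterate_derivative_rodriguesPoly n a b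
  refine ⟨C ((-1 : ℝ) ^ n / (2 ^ n * n.factorial)) * q, ?_, fun x h1 h2 => ?_⟩
  · refine (natDegree_C_mul_le _ _).trans ?_
    rcases eq_or_ne q 0 with rfl | hq0
    · simp
    have hm : (1 - X : ℝ[X]).natDegree = 1 := by
      rw [← natDegree_neg, neg_sub, ← C_1, natDegree_X_sub_C]
    have hp : (1 + X : ℝ[X]).natDegree = 1 := by
      rw [add_comm, ← C_1, natDegree_X_add_C]
    have hm0 : (1 - X : ℝ[X]) ≠ 0 := ne_zero_of_natDegree_gt (n := 0) (by omega)
    have hp0 : (1 + X : ℝ[X]) ≠ 0 := ne_zero_of_natDegree_gt (n := 0) (by omega)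
    have hdeg := (natDegree_iterate_derivative (rodriguesPoly n a b) n).trans
      (Nat.sub_le_sub_right (natDegree_rodriguesPoly_le n a b) n)
    rw [hq, natDegree_mul (mul_ne_zero (pow_ne_zero _ hm0) (pow_ne_zero _ hp0)) hq0,
      natDegree_mul (pow_ne_zero _ hm0) (pow_ne_zero _ hp0), natDegree_pow, natDegree_pow,
      hm, hp] at hdeg
    omega
  · rw [jacobiP_eq_eval_derivative, hq]
    simp only [zpow_neg, zpow_natCast, eval_mul, eval_pow, eval_sub, eval_add, eval_one, eval_X,
      eval_C]
    field_simp

open Polynomial in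
/-- Repeated integration by parts against a polynomial vanishing to order `n` at `±1`. -/
theorem integral_iterate_derivative_mul_eq_zero {n : ℕ} {p : ℝ[X]}
    (hm : (1 - X) ^ n ∣ p) (hp : (1 + X) ^ n ∣ p) {m : ℕ} (hmn : m ≤ n) {q : ℝ[X]}
    (hq : derivative^[m] q = 0) :
    ∫ x in (-1 : ℝ)..1, (derivative^[m] p).eval x * q.eval x = 0 := by
  induction m generalizing q with
  | zero =>
    rw [Function.iterate_zero_apply] at hq
    simp [hq]
  | succ m ih =>
    have hone : (derivative^[m] p).eval 1 = 0 := by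
      have h := eval_dvd (x := 1) (pow_sub_dvd_iterate_derivative_of_pow_dvd m hm)
      simpa [zero_pow (show n - m ≠ 0 by omega)] using h
    have hneg : (derivative^[m] p).eval (-1) = 0 := by
      have h := eval_dvd (x := -1) (pow_sub_dvd_iterate_derivative_of_pow_dvd m hp)
      simpa [zero_pow (show n - m ≠ 0 by omega)] using h
    have hparts := intervalIntegral.integral_deriv_mul_eq_sub (a := -1) (b := 1)
      (fun x _ => (derivative^[m] p).hasDerivAt x) (fun x _ => q.hasDerivAt x)
      ((Polynomial.continuous _).intervalIntegrable _ _)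
      ((Polynomial.continuous _).intervalIntegrable _ _)
    rw [intervalIntegral.integral_add (Continuous.intervalIntegrable (by fun_prop) _ _)
      (Continuous.intervalIntegrable (by fun_prop) _ _),
      ih (by omega) (by rwa [← Function.iterate_succ_apply]), hone, hneg] at hparts
    simpa [Function.iterate_succ_apply'] using hparts

theorem integral_weight_mul_jacobiP_mul_jacobiP_of_lt {m n : ℕ} (h : m < n) (a b : ℕ) :
    ∫ x in (-1 : ℝ)..1,
      (1 - x) ^ a * (1 + x) ^ b * (jacobiP n a b x * jacobiP m a b x) = 0 := by
  obtain ⟨q, hqdeg, hq⟩ := exists_polynomial_eq_jacobiP m a b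
  have hzero := integral_iterate_derivative_mul_eq_zero (p := rodriguesPoly n a b)
    ((pow_dvd_pow _ (Nat.le_add_right n a)).trans (Dvd.intro _ rfl))
    ((pow_dvd_pow _ (Nat.le_add_right n b)).trans (Dvd.intro_left _ rfl)) le_rfl
    (Polynomial.iterate_derivative_eq_zero (hqdeg.trans_lt h))
  rw [← mul_zero ((-1 : ℝ) ^ n / (2 ^ n * n.factorial)), ← hzero,
    ← intervalIntegral.integral_const_mul]
  simp only [intervalIntegral.integral_of_le (show (-1 : ℝ) ≤ 1 by norm_num),
    MeasureTheory.integral_Ioc_eq_integral_Ioo]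
  refine MeasureTheory.setIntegral_congr_fun measurableSet_Ioo fun x hx => ?_
  have h1 : 1 - x ≠ 0 := by linarith [hx.2]
  have h2 : 1 + x ≠ 0 := by linarith [hx.1]
  simp only [hq x h1 h2, jacobiP_eq_eval_derivative n, zpow_neg, zpow_natCast]
  field_simp

/-- Jacobi polynomials of distinct degrees are orthogonal for the weight `(1 - x)^a (1 + x)^b`. -/
theorem integral_weight_mul_jacobiP_mul_jacobiP {m n : ℕ} (h : m ≠ n) (a b : ℕ) :
    ∫ x in (-1 : ℝ)..1,
      (1 - x) ^ a * (1 + x) ^ b * (jacobiP m a b x * jacobiP n a b x) = 0 := by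
  rcases h.lt_or_gt with h | h
  · simpa only [mul_comm (jacobiP m a b _)] using
      integral_weight_mul_jacobiP_mul_jacobiP_of_lt h a b
  · exact integral_weight_mul_jacobiP_mul_jacobiP_of_lt h a b

/-- The integral of a product of Dubiner functions along a horizontal slice of the triangle. -/
theorem integral_dubiner2_mul_dubiner2_slice (i j k l : ℕ) {y : ℝ} (hy : y ≤ 1) :
    ∫ x in (-1 : ℝ)..(-y), dubiner2 i j (x, y) * dubiner2 k l (x, y) =
      (∫ η in (-1 : ℝ)..1, jacobiP i 0 0 η * jacobiP k 0 0 η) *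
        (((1 - y) / 2) ^ (i + k + 1) *
          (jacobiP j (2 * i + 1) 0 y * jacobiP l (2 * k + 1) 0 y)) := by
  rcases hy.eq_or_lt with rfl | hy
  · simp
  have h1 : 1 - y ≠ 0 := by linarith
  have hsub := intervalIntegral.integral_comp_mul_add (a := -1) (b := -y)
    (fun η => jacobiP i 0 0 η * jacobiP k 0 0 η)
    (div_ne_zero two_ne_zero h1) ((1 + y) / (1 - y))
  rw [show 2 / (1 - y) * -1 + (1 + y) / (1 - y) = -1 by field_simp; ring,
    show 2 / (1 - y) * -y + (1 + y) / (1 - y) = 1 by field_simp; ring, inv_div,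
    smul_eq_mul] at hsub
  calc
    _ = ∫ x in (-1 : ℝ)..(-y), ((1 - y) / 2) ^ (i + k) *
          (jacobiP j (2 * i + 1) 0 y * jacobiP l (2 * k + 1) 0 y) *
          (jacobiP i 0 0 (2 / (1 - y) * x + (1 + y) / (1 - y)) *
            jacobiP k 0 0 (2 / (1 - y) * x + (1 + y) / (1 - y))) := by
      refine intervalIntegral.integral_congr fun x _ => ?_
      have hx : (1 + 2 * x + y) / (1 - y) = 2 / (1 - y) * x + (1 + y) / (1 - y) := by
        field_simp
        ring
      simp only [dubiner2, hx]
      ring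
    _ = _ := by
      rw [intervalIntegral.integral_const_mul, hsub]
      ring

theorem measurableSet_refTriangle : MeasurableSet refTriangle := by
  have h : IsClosed refTriangle :=
    (isClosed_le continuous_const continuous_fst).inter
      ((isClosed_le continuous_const continuous_snd).inter
        (isClosed_le (continuous_fst.add continuous_snd) continuous_const))
  exact h.measurableSet

open MeasureTheory in
/-- Fubini's theorem on the reference triangle, integrating over horizontal slices first. -/
theorem setIntegral_refTriangle {f : ℝ × ℝ → ℝ} (hf : IntegrableOn f refTriangle) :
    ∫ ξ in refTriangle, f ξ = ∫ y in (-1 : ℝ)..1, ∫ x in (-1 : ℝ)..(-y), f (x, y) := by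
  rw [← integral_indicator measurableSet_refTriangle, Measure.volume_eq_prod,
    integral_prod_symm _ ((integrable_indicator_iff measurableSet_refTriangle).2 hf),
    intervalIntegral.integral_of_le (show (-1 : ℝ) ≤ 1 by norm_num),
    ← integral_Icc_eq_integral_Ioc, ← integral_indicator measurableSet_Icc]
  congr 1
  ext y
  by_cases hy : y ∈ Set.Icc (-1 : ℝ) 1
  · rw [Set.indicator_of_mem hy, intervalIntegral.integral_of_le (by linarith [hy.2]),
      ← integral_Icc_eq_integral_Ioc, ← integral_indicator measurableSet_Icc]
    congr 1
    ext x
    refine Set.indicator_eq_indicator ?_ rfl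
    simp only [refTriangle, Set.mem_ofPred_eq, Set.mem_Icc, hy.1, true_and]
    constructor <;> rintro ⟨h1, h2⟩ <;> exact ⟨h1, by linarith⟩
  · rw [Set.indicator_of_notMem hy]
    refine integral_eq_zero_of_ae (Filter.Eventually.of_forall fun x => ?_)
    refine Set.indicator_of_notMem (fun hx => hy ?_) f
    obtain ⟨h1, h2, h3⟩ := hx
    exact ⟨h2, by dsimp only at h1 h3; linarith⟩

/-- The two-dimensional Dubiner basis functions are pairwise L²-orthogonal on
the reference triangle. -/
theorem dubiner2_orthogonal (i j k l : ℕ) (h : (i, j) ≠ (k, l)) :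
    ∫ ξ in refTriangle, dubiner2 i j ξ * dubiner2 k l ξ = 0 := by
  by_cases hf : MeasureTheory.IntegrableOn (fun ξ => dubiner2 i j ξ * dubiner2 k l ξ) refTriangle
  swap
  · exact MeasureTheory.integral_undef hf
  rw [setIntegral_refTriangle hf]
  have hslice : Set.EqOn
      (fun y : ℝ => ∫ x in (-1 : ℝ)..(-y), dubiner2 i j (x, y) * dubiner2 k l (x, y))
      (fun y => (∫ η in (-1 : ℝ)..1, jacobiP i 0 0 η * jacobiP k 0 0 η) *
        (((1 - y) / 2) ^ (i + k + 1) *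
          (jacobiP j (2 * i + 1) 0 y * jacobiP l (2 * k + 1) 0 y))) (Set.uIcc (-1) 1) := by
    intro y hy
    rw [Set.uIcc_of_le (by norm_num)] at hy
    exact integral_dubiner2_mul_dubiner2_slice i j k l hy.2
  rw [intervalIntegral.integral_congr hslice, intervalIntegral.integral_const_mul]
  rcases eq_or_ne i k with rfl | hik
  · have hjl : j ≠ l := fun hjl => h (by rw [hjl])
    have horth := integral_weight_mul_jacobiP_mul_jacobiP hjl (2 * i + 1) 0
    simp only [pow_zero, mul_one] at horth
    simp only [← two_mul, div_pow, div_mul_eq_mul_div, intervalIntegral.integral_div, horth,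
      zero_div, mul_zero]
  · have horth := integral_weight_mul_jacobiP_mul_jacobiP hik 0 0
    simp only [pow_zero, one_mul] at horth
    rw [horth, zero_mul]
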